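/- In the setting of a fixed torsion-free knapsack expression E = g₁^{x₁}⋯g_k^{x_k}g_{k+1} over G ≀ H with variable partition V_E = S ⊎ M: let ν = μ ⊕ κ with μ ∈ ℕ^M and κ ∈ ℕ^S. Then ν(E) = 1 if and only if σ(ν(E)) = 1 and there exists a profile P ⊆ 𝒫(A) such that every C ∈ P is κ-cancelling and every μ-cluster is contained in P. -/

import Mathlib

namespace WreathPaper

open Function

variable (G H : Type*) [Group G] [Group H]

/-- The automorphism of `H → G` (pointwise multiplication) given by translation by `h`. -/
def wreathAut (h : H) : MulAut (H → G) where
  toFun f := fun a => f (h⁻¹ * a)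
  invFun f := fun a => f (h * a)
  left_inv f := by funext a; simp
  right_inv f := by funext a; simp
  map_mul' f g := rfl

/-- The action of `H` on `H → G` by translation, as a homomorphism into `MulAut`. -/
def wreathphi : H →* MulAut (H → G) where
  toFun := wreathAut G H
  map_one' := by
    apply MulEquiv.toMonoidHom_injective
    ext f a
    simp [wreathAut]
  map_mul' h₁ h₂ := by
    apply MulEquiv.toMonoidHom_injective
    ext f a
    simp [wreathAut, mul_assoc]

lemma finite_mulSupport_shift {f : H → G} (hf : (mulSupport f).Finite) (h : H) :
    (mulSupport fun a => f (h * a)).Finite := by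
  have : (fun a : H => f (h * a)) = f ∘ (fun a => h * a) := rfl
  rw [this, Function.mulSupport_comp_eq_preimage]
  exact hf.preimage (fun x _ y _ hxy => by simpa using hxy)

/-- The restricted wreath product `G ≀ H`, as the subgroup of the (unrestricted)
semidirect product `(H → G) ⋊ H` consisting of pairs whose first component has
finite support. -/
def RW : Subgroup ((H → G) ⋊[wreathphi G H] H) where
  carrier := {x | (mulSupport x.left).Finite}
  one_mem' := by
    simp only [Set.mem_setOf_eq, SemidirectProduct.one_left]
    simp
  mul_mem' := by
    intro a b ha hb
    simp only [Set.mem_setOf_eq, SemidirectProduct.mul_left] at *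
    refine Set.Finite.subset (Set.Finite.union ha
      (finite_mulSupport_shift G H hb a.right⁻¹)) ?_
    exact Function.mulSupport_mul _ _
  inv_mem' := by
    intro a ha
    simp only [Set.mem_setOf_eq, SemidirectProduct.inv_left] at *
    have : (wreathphi G H a.right⁻¹ a.left⁻¹ : H → G)
        = fun x => (a.left (a.right * x))⁻¹ := by
      funext x
      simp [wreathphi, wreathAut]
    rw [this]
    have h2 : (mulSupport fun x => (a.left (a.right * x))⁻¹)
        = mulSupport fun x => a.left (a.right * x) := by
      simp [Function.mulSupport_inv]
    rw [h2]
    exact finite_mulSupport_shift G H ha a.right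

/-- The projection `σ : G ≀ H → H`. -/
def σw (x : RW G H) : H := (x : (H → G) ⋊[wreathphi G H] H).right

/-- The projection `τ : G ≀ H → G^(H)`. -/
def τw (x : RW G H) : H → G := (x : (H → G) ⋊[wreathphi G H] H).left

/-- The canonical embedding of `G` into `G ≀ H`: `g ↦ (f_g, 1)`. -/
def embG [DecidableEq H] (g : G) : RW G H :=
  ⟨⟨Pi.mulSingle (1 : H) g, 1⟩, by
    exact Set.Finite.subset (Set.finite_singleton (1 : H))
      Pi.mulSupport_mulSingle_subset⟩

/-- The canonical embedding of `H` into `G ≀ H`: `h ↦ (𝟙, h)`. -/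
def embH (h : H) : RW G H :=
  ⟨⟨1, h⟩, by simp [RW]⟩

end WreathPaper

namespace WreathPaper

variable {G H : Type*} [Group G] [Group H] {k : ℕ}

/-- The type of addresses of the torsion-free knapsack expression
`E = g₁^{x₁} ⋯ g_k^{x_k} g_{k+1}` (with bases `g 0, …, g k`): pairs `(i, h)`
with `i ∈ [1, k+1]` and `h ∈ supp(gᵢ)`. -/
def Addr (g : Fin (k + 1) → ↥(RW G H)) : Type _ :=
  {p : Fin (k + 1) × H // p.2 ∈ Function.mulSupport (τw G H (g p.1))}

/-- The evaluation `ν(E) = g₁^{ν(x₁)} ⋯ g_k^{ν(x_k)} g_{k+1}`. -/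
def evalE (g : Fin (k + 1) → ↥(RW G H)) (ν : Fin k → ℕ) : ↥(RW G H) :=
  ((List.finRange k).map fun i => g i.castSucc ^ ν i).prod * g (Fin.last k)

/-- The prefix product `σ(g₁)^{ν(x₁)} ⋯ σ(g_j)^{ν(x_j)}`. -/
def headProd (g : Fin (k + 1) → ↥(RW G H)) (ν : Fin k → ℕ) (j : ℕ) : H :=
  (((List.finRange k).take j).map fun i => σw G H (g i.castSucc) ^ ν i).prod

/-- The evaluation at `ν` of the expression `τ(a)` over `G` associated with the
address `a = (i, h)`: it is `τ(g_{k+1})(h)` if `i = k+1`, the power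
`(τ(gᵢ)(h))^{ν(xᵢ)}` if `i ≤ k` and `σ(gᵢ) = 1`, and `τ(gᵢ)(h)` if `i ≤ k`
and `σ(gᵢ) ≠ 1` (i.e. `σ(gᵢ)` of infinite order).  It only depends on the
components of `ν` belonging to `S = {xᵢ : σ(gᵢ) = 1}`. -/
noncomputable def tauVal (g : Fin (k + 1) → ↥(RW G H)) (a : Addr g)
    (ν : Fin k → ℕ) : G :=
  letI := Classical.propDecidable (σw G H (g a.1.1) = 1)
  if hlt : (a.1.1 : ℕ) < k then
    if σw G H (g a.1.1) = 1 then τw G H (g a.1.1) a.1.2 ^ ν ⟨a.1.1, hlt⟩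
    else τw G H (g a.1.1) a.1.2
  else τw G H (g a.1.1) a.1.2

/-- The set `A_{μ,h}` of all addresses `a` such that `μ'(σ(a)) = h` for some
`μ' ⊏ μ`, where `σ(a) = σ(g₁)^{x₁} ⋯ σ(g_k)^{x_k} h'` for `a = (k+1, h')` and
`σ(a) = σ(g₁)^{x₁} ⋯ σ(g_{i−1})^{x_{i−1}} σ(gᵢ)^{yᵢ} h'` for `a = (i, h')`,
`i ≤ k` (the variable `yᵢ`, present only when `σ(gᵢ)` has infinite order,
ranges over `[0, μ(xᵢ) − 1]`; factors with base `1` evaluate to `1`).  Only the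
components of `ν` belonging to `M = {xᵢ : σ(gᵢ) ≠ 1}` are relevant. -/
def clusterAt (g : Fin (k + 1) → ↥(RW G H)) (ν : Fin k → ℕ) (h : H) :
    Set (Addr g) :=
  {a | if hlt : (a.1.1 : ℕ) < k then
        ∃ y : ℕ, (σw G H (g a.1.1) ≠ 1 → y < ν ⟨a.1.1, hlt⟩) ∧
          headProd g ν (a.1.1 : ℕ) * σw G H (g a.1.1) ^ y * a.1.2 = h
      else headProd g ν k * a.1.2 = h}

/-- `le` is an admissible linear order on the addresses: a linear order such
that `(i, h) ≤ (j, h')` whenever `i < j`, and such that for `i ≤ k` with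
`σ(gᵢ)` nontrivial (hence of infinite order), `h ≼_{σ(gᵢ)} h'` implies
`(i, h) ≤ (i, h')`. -/
def GoodOrder (g : Fin (k + 1) → ↥(RW G H)) (le : Addr g → Addr g → Prop) :
    Prop :=
  (∀ a b, le a b ∨ le b a) ∧
  (∀ a b c, le a b → le b c → le a c) ∧
  (∀ a b, le a b → le b a → a = b) ∧
  (∀ a b : Addr g, a.1.1 < b.1.1 → le a b) ∧
  (∀ a b : Addr g, a.1.1 = b.1.1 → (a.1.1 : ℕ) < k → σw G H (g a.1.1) ≠ 1 →
      (∃ n : ℕ, a.1.2 = σw G H (g a.1.1) ^ n * b.1.2) → le a b)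

/-- `prodOver g le C κ v` says that the evaluation `κ(E_C)` of the expression
`E_C = ∏_{a ∈ C} τ(a)` — the product over `C` taken in increasing `le`-order,
expressed via an `le`-sorted duplicate-free enumeration of `C` — equals `v`. -/
def prodOver (g : Fin (k + 1) → ↥(RW G H)) (le : Addr g → Addr g → Prop)
    (C : Set (Addr g)) (κ : Fin k → ℕ) (v : G) : Prop :=
  ∃ l : List (Addr g), l.Nodup ∧ (∀ x, x ∈ l ↔ x ∈ C) ∧ l.Pairwise le ∧
    (l.map fun a => tauVal g a κ).prod = v

end WreathPaper

namespace WreathPaper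

section Helpers

variable {G H : Type*} [Group G] [Group H] {k : ℕ}

lemma sw_mul (x y : RW G H) : σw G H (x * y) = σw G H x * σw G H y := rfl

lemma sw_one : σw G H 1 = 1 := rfl

lemma tw_one (t : H) : τw G H 1 t = 1 := rfl

lemma tw_mul (x y : RW G H) (t : H) :
    τw G H (x * y) t = τw G H x t * τw G H y ((σw G H x)⁻¹ * t) := rfl

lemma sw_pow (x : RW G H) (n : ℕ) : σw G H (x ^ n) = σw G H x ^ n := by
  induction n with
  | zero => simp [sw_one]
  | succ n ih => rw [pow_succ, sw_mul, ih, pow_succ]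

lemma rw_ext {x y : RW G H} (h1 : σw G H x = σw G H y)
    (h2 : ∀ t, τw G H x t = τw G H y t) : x = y :=
  Subtype.ext (SemidirectProduct.ext (funext h2) h1)

lemma tw_pow (x : RW G H) (n : ℕ) (t : H) :
    τw G H (x ^ n) t
      = ((List.range n).map fun y => τw G H x ((σw G H x ^ y)⁻¹ * t)).prod := by
  induction n with
  | zero => simp [tw_one]
  | succ n ih => rw [pow_succ, tw_mul, ih, sw_pow, List.range_succ]; simp

lemma headProd_spec (g : Fin (k + 1) → ↥(RW G H)) (ν : Fin k → ℕ) (t : H) (j : ℕ) :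
    σw G H ((((List.finRange k).take j).map fun i => g i.castSucc ^ ν i).prod)
        = headProd g ν j ∧
    τw G H ((((List.finRange k).take j).map fun i => g i.castSucc ^ ν i).prod) t
      = (((List.finRange k).take j).map fun i =>
          τw G H (g i.castSucc ^ ν i) ((headProd g ν i)⁻¹ * t)).prod := by
  induction j with
  | zero => simp [headProd, sw_one, tw_one]
  | succ j ih =>
    obtain ⟨ih1, ih2⟩ := ih
    by_cases hj : j < k
    · have e : (List.finRange k).take (j + 1) = (List.finRange k).take j ++ [⟨j, hj⟩] := by
        rw [List.take_add_one]; simp [hj]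
      constructor
      · rw [headProd, e, List.map_append, List.prod_append, sw_mul, ih1]
        simp [sw_pow, headProd]
      · rw [e, List.map_append, List.prod_append, tw_mul, ih1, ih2]
        simp
    · have e : (List.finRange k).take (j + 1) = (List.finRange k).take j := by
        rw [List.take_of_length_le (by simp; omega), List.take_of_length_le (by simp; omega)]
      have e2 : headProd g ν (j + 1) = headProd g ν j := by simp only [headProd, e]
      rw [e, e2]; exact ⟨ih1, ih2⟩

open Classical in
noncomputable def tv (g : Fin (k + 1) → ↥(RW G H)) (ν : Fin k → ℕ) (i : Fin (k + 1)) (x : H) : G :=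
  if hlt : (i : ℕ) < k then
    if σw G H (g i) = 1 then τw G H (g i) x ^ ν ⟨i, hlt⟩
    else τw G H (g i) x
  else τw G H (g i) x

lemma tauVal_eq (g : Fin (k + 1) → ↥(RW G H)) (ν : Fin k → ℕ) (a : Addr g) :
    tauVal g a ν = tv g ν a.1.1 a.1.2 := by
  unfold tauVal tv
  rfl

lemma tv_one (g : Fin (k + 1) → ↥(RW G H)) (ν : Fin k → ℕ) (i : Fin (k + 1)) (x : H)
    (hx : τw G H (g i) x = 1) : tv g ν i x = 1 := by
  unfold tv
  split_ifs <;> simp [hx]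

open Classical in
noncomputable def mkA (g : Fin (k + 1) → ↥(RW G H)) (i : Fin (k + 1)) (x : H) : Option (Addr g) :=
  if hx : x ∈ Function.mulSupport (τw G H (g i)) then some ⟨(i, x), hx⟩ else none

lemma mkA_eq_some (g : Fin (k + 1) → ↥(RW G H)) (i : Fin (k + 1)) (x : H) (a : Addr g) :
    mkA g i x = some a ↔ a.1 = (i, x) := by
  unfold mkA
  split_ifs with hx
  · constructor
    · intro h
      rw [← Option.some.inj h]
    · intro h; exact congrArg some (Subtype.ext h.symm)
  · constructor
    · intro h; cases h
    · intro h
      have := a.2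
      rw [h] at this
      exact absurd this hx

lemma prod_filterMap (g : Fin (k + 1) → ↥(RW G H)) (ν : Fin k → ℕ) (i : Fin (k + 1))
    (f : ℕ → H) (l : List ℕ) :
    ((l.filterMap fun y => mkA g i (f y)).map fun a => tauVal g a ν).prod
      = (l.map fun y => tv g ν i (f y)).prod := by
  induction l with
  | nil => simp
  | cons y l ih =>
    rw [List.filterMap_cons]
    cases h : mkA g i (f y) with
    | none =>
      have : τw G H (g i) (f y) = 1 := by
        unfold mkA at h
        split_ifs at h with hx
        simpa using hx
      simp only [List.map_cons, List.prod_cons, ih, tv_one g ν i _ this, one_mul]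
    | some a =>
      have h' := (mkA_eq_some _ _ _ _).1 h
      simp only [List.map_cons, List.prod_cons, ih, tauVal_eq g ν a, h']

open Classical in
noncomputable def cnt (g : Fin (k + 1) → ↥(RW G H)) (ν : Fin k → ℕ) (i : Fin (k + 1)) : ℕ :=
  if hlt : (i : ℕ) < k then if σw G H (g i) = 1 then 1 else ν ⟨i, hlt⟩ else 1

noncomputable def blk (g : Fin (k + 1) → ↥(RW G H)) (ν : Fin k → ℕ) (t : H) (i : Fin (k + 1)) :
    List (Addr g) :=
  (List.range (cnt g ν i)).filterMap fun y =>
    mkA g i ((σw G H (g i) ^ y)⁻¹ * ((headProd g ν i)⁻¹ * t))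

noncomputable def lst (g : Fin (k + 1) → ↥(RW G H)) (ν : Fin k → ℕ) (t : H) : List (Addr g) :=
  (List.finRange (k + 1)).flatMap (blk g ν t)

lemma blk_prod_castSucc (g : Fin (k + 1) → ↥(RW G H)) (ν : Fin k → ℕ) (t : H) (i : Fin k) :
    ((blk g ν t i.castSucc).map fun a => tauVal g a ν).prod
      = τw G H (g i.castSucc ^ ν i) ((headProd g ν i)⁻¹ * t) := by
  rw [blk, prod_filterMap, tw_pow]
  by_cases hs : σw G H (g i.castSucc) = 1
  · simp [cnt, tv, hs]
  · simp [cnt, tv, hs]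

lemma blk_prod_last (g : Fin (k + 1) → ↥(RW G H)) (ν : Fin k → ℕ) (t : H) :
    ((blk g ν t (Fin.last k)).map fun a => tauVal g a ν).prod
      = τw G H (g (Fin.last k)) ((headProd g ν k)⁻¹ * t) := by
  rw [blk, prod_filterMap]
  simp [cnt, tv]

lemma lst_prod (g : Fin (k + 1) → ↥(RW G H)) (ν : Fin k → ℕ) (t : H) :
    ((lst g ν t).map fun a => tauVal g a ν).prod = τw G H (evalE g ν) t := by
  have hp := headProd_spec g ν t k
  rw [List.take_of_length_le (by simp)] at hp
  rw [evalE, tw_mul, hp.1, hp.2, lst, List.finRange_succ_last, List.flatMap_append,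
    List.map_append, List.prod_append, List.flatMap_singleton, blk_prod_last]
  congr 1
  rw [List.map_flatMap, List.flatMap_map]
  generalize List.finRange k = l
  induction l with
  | nil => simp
  | cons i l ih =>
    rw [List.flatMap_cons, List.prod_append, ih, blk_prod_castSucc, List.map_cons, List.prod_cons]

lemma mem_blk (g : Fin (k + 1) → ↥(RW G H)) (ν : Fin k → ℕ) (t : H) (i : Fin (k + 1))
    (a : Addr g) : a ∈ blk g ν t i ↔ a.1.1 = i ∧ ∃ y < cnt g ν i,
      headProd g ν i * σw G H (g i) ^ y * a.1.2 = t := by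
  simp only [blk, List.mem_filterMap, List.mem_range, mkA_eq_some, Prod.ext_iff]
  constructor
  · rintro ⟨y, hy, h1, h2⟩
    exact ⟨h1, y, hy, by rw [h2]; group⟩
  · rintro ⟨h1, y, hy, h2⟩
    exact ⟨y, hy, h1, by rw [← h2]; group⟩

lemma mem_lst (g : Fin (k + 1) → ↥(RW G H)) (ν : Fin k → ℕ) (t : H) (a : Addr g) :
    a ∈ lst g ν t ↔ a ∈ clusterAt g ν t := by
  simp only [lst, List.mem_flatMap, List.mem_finRange, true_and, mem_blk, exists_eq_left']
  simp only [clusterAt, Set.mem_setOf_eq, cnt]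
  by_cases hlt : (a.1.1 : ℕ) < k
  · by_cases hs : σw G H (g a.1.1) = 1
    · simp [hlt, hs]
    · simp [hlt, hs]
  · have : (a.1.1 : ℕ) = k := by have := a.1.1.2; omega
    simp [this]

lemma lst_pairwise (g : Fin (k + 1) → ↥(RW G H))
    (htf : ∀ i : Fin k, σw G H (g i.castSucc) = 1 ∨
        ∀ n : ℕ, σw G H (g i.castSucc) ^ n = 1 → n = 0)
    (le : Addr g → Addr g → Prop) (hle : GoodOrder g le) (ν : Fin k → ℕ) (t : H) :
    (lst g ν t).Pairwise fun a b => le a b ∧ a ≠ b := by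
  obtain ⟨-, -, -, h4, h5⟩ := hle
  rw [lst, List.pairwise_flatMap]
  constructor
  · intro i _
    rw [blk, List.pairwise_filterMap]
    refine List.Pairwise.imp_of_mem ?_ List.pairwise_lt_range
    intro y z hy hz hyz a ha b hb
    rw [mkA_eq_some] at ha hb
    rw [List.mem_range] at hy hz
    have hik : (i : ℕ) < k ∧ σw G H (g i) ≠ 1 := by
      unfold cnt at hz
      split_ifs at hz with c1 c2
      · omega
      · exact ⟨c1, c2⟩
      · omega
    have hpow : σw G H (g i) ^ z = σw G H (g i) ^ y * σw G H (g i) ^ (z - y) := by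
      rw [← pow_add]; congr 1; omega
    have key : a.1.2 = σw G H (g i) ^ (z - y) * b.1.2 := by
      rw [ha, hb]
      simp only
      rw [hpow]; group
    constructor
    · refine h5 a b (by rw [ha, hb]) (by rw [ha]; exact hik.1) (by rw [ha]; exact hik.2)
        ⟨z - y, ?_⟩
      rw [key, ha]
    · rintro rfl
      have h1 : σw G H (g i) ^ (z - y) = 1 := by
        have := key.symm
        rwa [mul_eq_right] at this
      rcases htf ⟨i, hik.1⟩ with h | h
      · exact hik.2 h
      · have := h (z - y) h1
        omega
  · refine List.Pairwise.imp ?_ (List.pairwise_lt_finRange _)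
    intro i j hij a ha b hb
    rw [mem_blk] at ha hb
    have : a.1.1 < b.1.1 := by rw [ha.1, hb.1]; exact hij
    refine ⟨h4 a b this, ?_⟩
    rintro rfl
    exact lt_irrefl _ this

lemma prodOver_lst (g : Fin (k + 1) → ↥(RW G H))
    (htf : ∀ i : Fin k, σw G H (g i.castSucc) = 1 ∨
        ∀ n : ℕ, σw G H (g i.castSucc) ^ n = 1 → n = 0)
    (le : Addr g → Addr g → Prop) (hle : GoodOrder g le) (ν : Fin k → ℕ) (t : H) :
    prodOver g le (clusterAt g ν t) ν (τw G H (evalE g ν) t) :=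
  ⟨lst g ν t, (lst_pairwise g htf le hle ν t).imp fun h => h.2, mem_lst g ν t,
    (lst_pairwise g htf le hle ν t).imp fun h => h.1, lst_prod g ν t⟩

lemma prodOver_unique (g : Fin (k + 1) → ↥(RW G H))
    (le : Addr g → Addr g → Prop) (hle : GoodOrder g le) (C : Set (Addr g)) (ν : Fin k → ℕ)
    (v w : G) (hv : prodOver g le C ν v) (hw : prodOver g le C ν w) : v = w := by
  obtain ⟨l, n1, m1, s1, rfl⟩ := hv
  obtain ⟨l', n2, m2, s2, rfl⟩ := hw
  have hp : l.Perm l' := (List.perm_ext_iff_of_nodup n1 n2).2 fun a => by rw [m1, m2]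
  rw [List.Perm.eq_of_pairwise (fun a b _ _ h1 h2 => hle.2.2.1 a b h1 h2) s1 s2 hp]

end Helpers

end WreathPaper

open WreathPaper Function in
/-- For a fixed torsion-free knapsack expression `E = g₁^{x₁} ⋯ g_k^{x_k} g_{k+1}`
over `G ≀ H` with variable partition `V_E = S ⊎ M` and a fixed admissible linear
order on the addresses: for every valuation `ν = μ ⊕ κ` (`μ ∈ ℕ^M`, `κ ∈ ℕ^S`),
we have `ν(E) = 1` if and only if `σ(ν(E)) = 1` and there is a profile
`P ⊆ 𝒫(A)` such that every `C ∈ P` is `κ`-cancelling (`κ(E_C) = 1`) and every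
`μ`-cluster (nonempty set of the form `A_{μ,h}`) belongs to `P`. -/
theorem statement10 {G H : Type*} [Group G] [Group H] (k : ℕ)
    (g : Fin (k + 1) → ↥(RW G H))
    (htf : ∀ i : Fin k, σw G H (g i.castSucc) = 1 ∨
        ∀ n : ℕ, σw G H (g i.castSucc) ^ n = 1 → n = 0)
    (le : Addr g → Addr g → Prop) (hle : GoodOrder g le)
    (ν : Fin k → ℕ) :
    evalE g ν = 1 ↔
      (σw G H (evalE g ν) = 1 ∧
       ∃ P : Set (Set (Addr g)),
         (∀ C ∈ P, prodOver g le C ν 1) ∧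
         (∀ h : H, (clusterAt g ν h).Nonempty → clusterAt g ν h ∈ P)) := by
  constructor
  · intro h
    refine ⟨by rw [h]; rfl, {C | prodOver g le C ν 1}, fun C hC => hC, fun t _ => ?_⟩
    have := prodOver_lst g htf le hle ν t
    rw [h] at this
    exact this
  · rintro ⟨hs, P, hP, hc⟩
    refine rw_ext hs fun t => ?_
    have h0 := prodOver_lst g htf le hle ν t
    rcases (clusterAt g ν t).eq_empty_or_nonempty with he | hne
    · rw [he] at h0
      exact prodOver_unique g le hle _ ν _ _ h0 ⟨[], by simp, by simp, by simp, by simp [tw_one]⟩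
    · exact prodOver_unique g le hle _ ν _ _ h0 (hP _ (hc t hne))
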